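/- arXiv:2311.05045 — 5 statements merged into one kernel-verified Lean document; each statement's English description precedes it below -/
import Mathlib

section
/- Let k, n be positive integers with n ≥ 2, let A = I_k ⊗ e_nᵀ ∈ ℝ^{k×kn} and B = [−e_k A] ∈ ℝ^{k×(kn+1)}. For j = 1,…,n−1 set v_j = 1/√(j+j²) and v̄_j = j/√(j+j²). Let Ō ∈ ℝ^{n×(n−1)} be the matrix whose row 0 is (−v_1, …, −v_{n−1}) and whose entry in row i (1 ≤ i ≤ n−1), column j is v̄_j if j = i, −v_j if j > i, and 0 if j < i. Set β = −1/√(n² + nk) and α = nβ, and define V = [[0, α], [I_k ⊗ Ō, β e]] ∈ ℝ^{(nk+1)×((n−1)k+1)}, i.e., the first row of V is (0,…,0,α) and the remaining nk rows are [I_k ⊗ Ō β e_{nk}]. Then Vᵀ V = I and B V = 0. -/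
open Matrix

/-!
Write `m = j + 1`. Column `j` of `Ō` is `v_j` times the integer vector `(-1, …, -1, m, 0, …, 0)`
with `m` leading entries `-1` (a Helmert contrast, `helmert m`). Pairing it with any `f` gives
`m f(m) - ∑_{i < m} f(i)` (`sum_helmert_mul`), so it annihilates every `f` constant on `{0, …, m}`:
the all-ones vector and every later contrast. Its squared length is `m + m²`, which `v_j`
normalizes; hence `Ō` has orthonormal columns, each summing to zero. The block structure of `V`
then reduces both claims to these facts and to `α = n β`, `(n² + n k) β² = 1`.
-/

/-- The unnormalized Helmert contrast `(-1, …, -1, m, 0, …)`, the entry `m` being in position `m`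
(counted from `0`). -/
def helmert (m i : ℕ) : ℝ := if i < m then -1 else if i = m then (m : ℝ) else 0

lemma sum_helmert_mul (n m : ℕ) (hm : m < n) (f : ℕ → ℝ) :
    ∑ i : Fin n, helmert m i * f i = m * f m - ∑ i ∈ Finset.range m, f i := by
  rw [Fin.sum_univ_eq_sum_range (fun i => helmert m i * f i) n]
  have hsub : Finset.range (m + 1) ⊆ Finset.range n := by
    intro i hi
    simp only [Finset.mem_range] at *
    omega
  rw [← Finset.sum_subset hsub, Finset.sum_range_succ]
  · have h : ∑ i ∈ Finset.range m, helmert m i * f i = ∑ i ∈ Finset.range m, -f i := by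
      refine Finset.sum_congr rfl fun i hi => ?_
      simp [helmert, Finset.mem_range.mp hi]
    rw [h, Finset.sum_neg_distrib]
    simp only [helmert, lt_irrefl, if_true, if_false]
    ring
  · intro i _ hi
    simp only [Finset.mem_range, not_lt] at hi
    simp [helmert, show ¬ i < m by omega, show i ≠ m by omega]

lemma sum_helmert (n m : ℕ) (hm : m < n) : ∑ i : Fin n, helmert m i = 0 := by
  simpa using sum_helmert_mul n m hm (fun _ => 1)

lemma sum_helmert_self (n m : ℕ) (hm : m < n) :
    ∑ i : Fin n, helmert m i * helmert m i = (m : ℝ) + (m : ℝ) ^ 2 := by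
  rw [sum_helmert_mul n m hm (helmert m)]
  have h : ∑ i ∈ Finset.range m, helmert m i = ∑ i ∈ Finset.range m, (-1 : ℝ) := by
    refine Finset.sum_congr rfl fun i hi => ?_
    simp [helmert, Finset.mem_range.mp hi]
  rw [h]
  simp [helmert]
  ring

lemma sum_helmert_lt (n m l : ℕ) (hm : m < n) (hl : m < l) :
    ∑ i : Fin n, helmert m i * helmert l i = 0 := by
  rw [sum_helmert_mul n m hm (helmert l)]
  have h : ∑ i ∈ Finset.range m, helmert l i = ∑ i ∈ Finset.range m, (-1 : ℝ) := by
    refine Finset.sum_congr rfl fun i hi => ?_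
    simp [helmert, (Finset.mem_range.mp hi).trans hl]
  rw [h]
  simp [helmert, hl]

lemma sum_helmert_ne (n m l : ℕ) (hm : m < n) (hl : l < n) (h : m ≠ l) :
    ∑ i : Fin n, helmert m i * helmert l i = 0 := by
  rcases lt_or_gt_of_ne h with h | h
  · exact sum_helmert_lt n m l hm h
  · simpa only [mul_comm] using sum_helmert_lt n l m hl h

/-- the explicit facial vector `V` built from the matrices `Ō` satisfies
`VᵀV = I` and `BV = 0`, where `A = I_k ⊗ e_nᵀ` and `B = [−e_k  A]`.
Column indices `j : Fin (n-1)` correspond to the mathematical index `j+1 ∈ {1,…,n−1}`. -/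
theorem facial_vector_orthonormal_and_in_nullspace
    (k n : ℕ) (hk : 0 < k) (hn : 2 ≤ n)
    (A : Matrix (Fin k) (Fin k × Fin n) ℝ)
    (hA : ∀ i p, A i p = if p.1 = i then 1 else 0)
    (B : Matrix (Fin k) (Unit ⊕ Fin k × Fin n) ℝ)
    (hB : ∀ i, B i (Sum.inl ()) = -1 ∧ ∀ p, B i (Sum.inr p) = A i p)
    (v vbar : Fin (n - 1) → ℝ)
    (hv : ∀ j, v j = 1 / Real.sqrt (((j : ℕ) + 1 : ℝ) + (((j : ℕ) + 1 : ℝ)) ^ 2))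
    (hvbar : ∀ j, vbar j = (((j : ℕ) + 1 : ℝ)) / Real.sqrt (((j : ℕ) + 1 : ℝ) + (((j : ℕ) + 1 : ℝ)) ^ 2))
    (Obar : Matrix (Fin n) (Fin (n - 1)) ℝ)
    (hObar : ∀ i j, Obar i j =
      if (i : ℕ) = 0 then -v j
      else if (j : ℕ) + 1 = (i : ℕ) then vbar j
      else if (i : ℕ) < (j : ℕ) + 1 then -v j
      else 0)
    (β α : ℝ)
    (hβ : β = -1 / Real.sqrt ((n : ℝ) ^ 2 + (n : ℝ) * (k : ℝ)))
    (hα : α = (n : ℝ) * β)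
    (V : Matrix (Unit ⊕ Fin k × Fin n) ((Fin k × Fin (n - 1)) ⊕ Unit) ℝ)
    (hV : (∀ c : Fin k × Fin (n - 1), V (Sum.inl ()) (Sum.inl c) = 0) ∧
      V (Sum.inl ()) (Sum.inr ()) = α ∧
      (∀ (s : Fin k) (i : Fin n) (t : Fin k) (j : Fin (n - 1)),
        V (Sum.inr (s, i)) (Sum.inl (t, j)) = if s = t then Obar i j else 0) ∧
      (∀ (s : Fin k) (i : Fin n), V (Sum.inr (s, i)) (Sum.inr ()) = β)) :
    Vᵀ * V = 1 ∧ B * V = 0 := by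
  obtain ⟨hV0, hVα, hVO, hVβ⟩ := hV
  have hO : ∀ i j, Obar i j = v j * helmert ((j : ℕ) + 1) i := by
    intro i j
    have hvb : vbar j = v j * ((j : ℕ) + 1 : ℝ) := by
      rw [hv, hvbar]
      ring
    rw [hObar, hvb]
    unfold helmert
    split_ifs <;> first | omega | (push_cast; ring)
  have hlt : ∀ j : Fin (n - 1), (j : ℕ) + 1 < n := fun j => by omega
  have hsum : ∀ j, ∑ i, Obar i j = 0 := by
    intro j
    simp only [hO]
    rw [← Finset.mul_sum, sum_helmert n _ (hlt j), mul_zero]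
  have horth : ∀ j l, ∑ i, Obar i j * Obar i l = if j = l then 1 else 0 := by
    intro j l
    have h : ∑ i, Obar i j * Obar i l
        = v j * v l * ∑ i : Fin n, helmert ((j : ℕ) + 1) i * helmert ((l : ℕ) + 1) i := by
      rw [Finset.mul_sum]
      refine Finset.sum_congr rfl fun i _ => ?_
      rw [hO, hO]
      ring
    rw [h]
    split_ifs with hjl
    · subst hjl
      rw [sum_helmert_self n _ (hlt j), hv]
      have hpos : (0 : ℝ) < ((j : ℕ) + 1 : ℝ) + ((j : ℕ) + 1 : ℝ) ^ 2 := by positivity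
      push_cast
      rw [div_mul_div_comm, Real.mul_self_sqrt hpos.le]
      field_simp
    · rw [sum_helmert_ne n _ _ (hlt j) (hlt l), mul_zero]
      intro h
      exact hjl (Fin.ext (by omega))
  have hβ2 : β * β * ((n : ℝ) ^ 2 + n * k) = 1 := by
    have hn' : (0 : ℝ) < n := by
      have : 0 < n := by omega
      exact_mod_cast this
    have hpos : (0 : ℝ) < (n : ℝ) ^ 2 + n * k := by positivity
    rw [hβ, div_mul_div_comm, Real.mul_self_sqrt hpos.le]
    field_simp
  constructor
  · ext a b
    rw [Matrix.mul_apply, Fintype.sum_sum_type]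
    simp only [Matrix.transpose_apply, Fintype.sum_prod_type, Finset.univ_unique,
      Finset.sum_singleton, PUnit.default_eq_unit]
    rcases a with ⟨s, j⟩ | ⟨⟩ <;> rcases b with ⟨t, l⟩ | ⟨⟩
    · simp only [hV0, hVO, Matrix.one_apply, Sum.inl.injEq, Prod.mk.injEq]
      -- Only the diagonal block `u = s = t` contributes.
      rw [Finset.sum_eq_single s (fun u _ hu => by simp [hu]) (by simp)]
      by_cases hst : s = t
      · simp [hst, horth]
      · simp [hst]
    · simp only [hV0, hVO, hVβ, Matrix.one_apply, reduceCtorEq, if_false]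
      rw [Finset.sum_eq_single s (fun u _ hu => by simp [hu]) (by simp)]
      simp [← Finset.sum_mul, hsum]
    · simp only [hV0, hVO, hVβ, Matrix.one_apply, reduceCtorEq, if_false]
      rw [Finset.sum_eq_single t (fun u _ hu => by simp [hu]) (by simp)]
      simp [← Finset.mul_sum, hsum]
    · simp only [hVα, hVβ, Matrix.one_apply, if_true, hα]
      simp only [Finset.sum_const, Finset.card_univ, Fintype.card_fin, nsmul_eq_mul]
      linear_combination hβ2
  · ext a b
    rw [Matrix.mul_apply, Fintype.sum_sum_type]
    simp only [Fintype.sum_prod_type, Finset.univ_unique,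
      Finset.sum_singleton, PUnit.default_eq_unit, (hB a).1, (hB a).2, hA]
    rw [Finset.sum_eq_single a (fun u _ hu => by simp [hu]) (by simp)]
    rcases b with ⟨t, l⟩ | ⟨⟩
    · by_cases hat : a = t
      · simp [hV0, hVO, hat, hsum]
      · simp [hV0, hVO, hat]
    · simp [hVα, hVβ, hα]
end

section
/- Let N = kn, let A = I_k ⊗ e_nᵀ, B = [−e_k A], K = BᵀB ∈ S^{N+1}, and let J be the gangster index set, i.e., the set of pairs (i,j) with 1 ≤ i ≠ j ≤ N such that (AᵀA − I)_{ij} > 0 (the off-diagonal positions of the n×n diagonal blocks). Suppose Y ∈ S^{N+1} satisfies: Y ⪰ 0, rank(Y) = 1, Y_{00} = 1, K Y = 0, and Y_{ij} = 0 for all (i,j) ∈ J. Then arrow(Y) = e_0, i.e., Y_{ii} = Y_{0i} for all i = 1,…,N. -/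
/-!
Since `Bᵀ B Y = 0` over the reals, already `B Y = 0`. The entry of this equation in block row `p.1`
and column `p` reads `-Y_{0p} + ∑ Y_{qp} = 0`, the sum running over the `q` in the block of `p`. The
gangster constraint kills every term with `q ≠ p`, leaving `Y_{pp} = Y_{0p}`.
-/

open Matrix

/-- for a rank-one PSD matrix `Y` with `Y_{00} = 1`, `KY = 0` and the
gangster entries zero, the arrow constraint `arrow(Y) = e_0` holds automatically,
i.e. `Y_{ii} = Y_{0i}` for all `i ≥ 1`.  The index `0` is `Sum.inl ()`. -/
theorem arrow_redundant_for_rank_one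
    (k n : ℕ)
    (A : Matrix (Fin k) (Fin k × Fin n) ℝ)
    (hA : ∀ i p, A i p = if p.1 = i then 1 else 0)
    (B : Matrix (Fin k) (Unit ⊕ Fin k × Fin n) ℝ)
    (hB : ∀ i, B i (Sum.inl ()) = -1 ∧ ∀ p, B i (Sum.inr p) = A i p)
    (K : Matrix (Unit ⊕ Fin k × Fin n) (Unit ⊕ Fin k × Fin n) ℝ)
    (hK : K = Bᵀ * B)
    (J : Set ((Fin k × Fin n) × (Fin k × Fin n)))
    (hJ : J = {pq | 0 < (Aᵀ * A - 1 : Matrix (Fin k × Fin n) (Fin k × Fin n) ℝ) pq.1 pq.2})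
    (Y : Matrix (Unit ⊕ Fin k × Fin n) (Unit ⊕ Fin k × Fin n) ℝ)
    (hYpsd : Y.PosSemidef) (hYrank : Y.rank = 1)
    (hY00 : Y (Sum.inl ()) (Sum.inl ()) = 1)
    (hKY : K * Y = 0)
    (hgang : ∀ pq ∈ J, Y (Sum.inr pq.1) (Sum.inr pq.2) = 0) :
    ∀ p : Fin k × Fin n, Y (Sum.inr p) (Sum.inr p) = Y (Sum.inl ()) (Sum.inr p) := by
  intro p
  have hBY : B * Y = 0 := by
    rw [hK] at hKY
    apply (Matrix.conjTranspose_mul_self_mul_eq_zero B Y).1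
    rwa [Matrix.conjTranspose_eq_transpose_of_trivial]
  have hoff : ∀ q : Fin k × Fin n, q.1 = p.1 → q ≠ p → Y (Sum.inr q) (Sum.inr p) = 0 := by
    intro q hq hne
    refine hgang (q, p) ?_
    rw [hJ]
    simp [Matrix.mul_apply, Matrix.one_apply, hA, hq, hne]
  have hentry := congrFun (congrFun hBY p.1) (Sum.inr p)
  rw [Matrix.mul_apply, Fintype.sum_sum_type, Finset.sum_eq_single p] at hentry
  · simp [(hB p.1).1, (hB p.1).2, hA] at hentry
    linarith
  · intro q _ hne
    rw [(hB p.1).2, hA]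
    split_ifs with hq
    · rw [hoff q hq hne, mul_zero]
    · rw [zero_mul]
  · simp
end

section
/- Let N = kn, m = N + 1 − k, A = I_k ⊗ e_nᵀ, B = [−e_k A], D ∈ S^N, D̂ = [[0,0],[0,D]] ∈ S^{N+1}, and let V ∈ ℝ^{(N+1)×m} have orthonormal columns with range(V) = null(B). Let p* = min { xᵀDx : Ax = e_k, x ∈ {0,1}^N } and suppose y_i = (1; x_i), i = 1,…,m, are linearly independent, where each x_i is optimal for this problem. Let Ŷ = (1/m) Σ_{i=1}^m y_i y_iᵀ and R̂ = Vᵀ Ŷ V. Then Ŷ = V R̂ Vᵀ with R̂ positive definite, and ⟨D̂, Ŷ⟩ = p*. Moreover, if x̄ ∈ {0,1}^N with A x̄ = e_k is feasible but not optimal (x̄ᵀD x̄ > p*), and ȳ = (1; x̄), then for all sufficiently small ε > 0 the matrix Z = Ŷ + ε(Ŷ − ȳ ȳᵀ) satisfies Z = V R_Z Vᵀ with R_Z := Vᵀ Z V positive definite, Z_{00} = 1, arrow(Z) = e_0, Z_{pq} = 0 for all gangster indices (p,q), and ⟨D̂, Z⟩ < p*. -/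
open Matrix

/-!
Write `y = (1; x)` for the lift of a feasible `x`. Feasibility says `B y = 0`, so `y` lies in the
range of `V` and is fixed by the orthogonal projection `V Vᵀ`; hence `M = V (Vᵀ M V) Vᵀ` for
`M = y yᵀ` and for every linear combination of such matrices. The arrow and gangster conditions are
linear too and hold for each `y yᵀ`.

Since `range V` has dimension `m`, the `m` independent vectors `y i` span it
(`exists_coeff_of_range`). So a vector of `range V` orthogonal to all of them vanishes, which makes
`Rhat` positive definite; and `ȳ = ∑ a i • y i`, so Cauchy–Schwarz gives
`(ȳ ⬝ u)² ≤ (∑ a i ²) ∑ (y i ⬝ u)²`. With `m` and `∑ a i ²` fixed, the rank-one perturbation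
`ε ȳ ȳᵀ` is dominated by `Yhat` on `range V` for small `ε` (`posDef_perturb`); the bound used below is
`ε₀ = 1 / (m ∑ a i ² + 1)`. The objective value of `Z` is
`p* + ε (p* - x̄ᵀ D x̄) < p*`.
-/

/-- Linearly independent vectors in the range of `V`, as many as `V` has columns, span it. -/
lemma exists_coeff_of_range {ι : Type*} {m : ℕ} (V : Matrix ι (Fin m) ℝ)
    (y : Fin m → ι → ℝ) (hli : LinearIndependent ℝ y) (hy : ∀ i, ∃ w, y i = V *ᵥ w)
    (z : Fin m → ℝ) : ∃ a : Fin m → ℝ, V *ᵥ z = ∑ i, a i • y i := by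
  choose w hw using hy
  have hyw : y = V.mulVecLin ∘ w := by
    funext i
    simp [hw i]
  have hliw : LinearIndependent ℝ w := by
    rw [hyw] at hli
    exact hli.of_comp
  have hspan := hliw.span_eq_top_of_card_eq_finrank' (by simp)
  have hz : z ∈ Submodule.span ℝ (Set.range w) := by
    rw [hspan]
    trivial
  obtain ⟨a, ha⟩ := (Submodule.mem_span_range_iff_exists_fun ℝ).1 hz
  refine ⟨a, ?_⟩
  rw [← ha, mulVec_sum]
  exact Finset.sum_congr rfl fun i _ => by rw [mulVec_smul, hw i]

/-- The quadratic form of a compression `Vᵀ M V` is that of `M` on the range of `V`. -/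
lemma quadForm_compress {ι κ : Type*} [Fintype ι] [Fintype κ] (V : Matrix ι κ ℝ)
    (M : Matrix ι ι ℝ) (z : κ → ℝ) :
    z ⬝ᵥ ((Vᵀ * M * V) *ᵥ z) = (V *ᵥ z) ⬝ᵥ (M *ᵥ (V *ᵥ z)) := by
  rw [← mulVec_mulVec, ← mulVec_mulVec, dotProduct_mulVec z Vᵀ, vecMul_transpose]

lemma quadForm_vecMulVec {ι : Type*} [Fintype ι] (y u : ι → ℝ) :
    u ⬝ᵥ (vecMulVec y y *ᵥ u) = (y ⬝ᵥ u) ^ 2 := by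
  rw [vecMulVec_mulVec]
  simp [dotProduct_comm u y, sq]

/-- The average `Y` of the `y i (y i)ᵀ` is positive definite on the range of `V`, and so is
`Y + ε (Y - ȳ ȳᵀ)` for `ȳ = ∑ a i • y i` and small `ε`; `ε = 0` covers `Y` itself. -/
lemma posDef_perturb {ι : Type*} [Fintype ι] {m : ℕ} (hm : 0 < m)
    (V : Matrix ι (Fin m) ℝ) (hV : Vᵀ * V = 1)
    (y : Fin m → ι → ℝ) (hli : LinearIndependent ℝ y) (hy : ∀ i, ∃ w, y i = V *ᵥ w)
    (a : Fin m → ℝ) (ε : ℝ) (hε : 0 ≤ ε) (hεa : ε * (m * ∑ i, a i ^ 2) < 1)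
    (Y : Matrix ι ι ℝ) (hY : Y = (1 / (m : ℝ)) • ∑ i, vecMulVec (y i) (y i)) :
    (Vᵀ * (Y + ε • (Y - vecMulVec (∑ i, a i • y i) (∑ i, a i • y i))) * V).PosDef := by
  have hm' : (0 : ℝ) < m := by exact_mod_cast hm
  have hYT : Yᵀ = Y := by
    rw [hY]
    simp [transpose_sum, transpose_vecMulVec]
  refine PosDef.of_dotProduct_mulVec_pos ?_ ?_
  · rw [IsHermitian, conjTranspose_eq_transpose_of_trivial]
    simp [transpose_mul, hYT, transpose_vecMulVec, Matrix.mul_assoc]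
  · intro z hz
    rw [star_trivial, quadForm_compress]
    set u := V *ᵥ z with hu
    have hu0 : u ≠ 0 := by
      intro h0
      apply hz
      have : Vᵀ *ᵥ u = z := by rw [hu, mulVec_mulVec, hV, one_mulVec]
      rw [← this, h0, mulVec_zero]
    have hq : u ⬝ᵥ (Y *ᵥ u) = (1 / (m : ℝ)) * ∑ i, (y i ⬝ᵥ u) ^ 2 := by
      rw [hY, smul_mulVec, dotProduct_smul, sum_mulVec, dotProduct_sum, smul_eq_mul]
      simp_rw [quadForm_vecMulVec]
    have hpos : 0 < ∑ i, (y i ⬝ᵥ u) ^ 2 := by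
      obtain ⟨b, hb⟩ := exists_coeff_of_range V y hli hy z
      refine lt_of_le_of_ne (Finset.sum_nonneg fun i _ => sq_nonneg _) fun h0 => hu0 ?_
      have hi : ∀ i, y i ⬝ᵥ u = 0 := fun i => by
        have := (Finset.sum_eq_zero_iff_of_nonneg fun i _ => sq_nonneg (y i ⬝ᵥ u)).1 h0.symm i
          (Finset.mem_univ i)
        exact pow_eq_zero_iff (two_ne_zero) |>.1 this
      rw [← dotProduct_self_eq_zero]
      conv_lhs => lhs; rw [hu, hb]
      rw [sum_dotProduct]
      simp [hi]
    have hcs : ((∑ i, a i • y i) ⬝ᵥ u) ^ 2 ≤ (∑ i, a i ^ 2) * ∑ i, (y i ⬝ᵥ u) ^ 2 := by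
      rw [sum_dotProduct]
      simp_rw [smul_dotProduct, smul_eq_mul]
      exact Finset.sum_mul_sq_le_sq_mul_sq _ _ _
    rw [add_mulVec, smul_mulVec, sub_mulVec, dotProduct_add, dotProduct_smul, dotProduct_sub,
      quadForm_vecMulVec, hq, smul_eq_mul]
    set S := ∑ i, a i ^ 2
    set Q := ∑ i, (y i ⬝ᵥ u) ^ 2
    have h1 : ε * ((∑ i, a i • y i) ⬝ᵥ u) ^ 2 ≤ ε * (S * Q) := mul_le_mul_of_nonneg_left hcs hε
    have h2 : ε * (S * Q) < 1 / (m : ℝ) * Q := by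
      have : ε * S < 1 / m := by
        rw [lt_div_iff₀ hm']
        linarith
      nlinarith
    have h3 : 0 ≤ ε * (1 / (m : ℝ) * Q) := by positivity
    linarith

/-- A binary vector whose blocks each sum to one has no two nonzero entries in a block. -/
lemma gangster_vec {k n : ℕ} (A : Matrix (Fin k) (Fin k × Fin n) ℝ)
    (hA : ∀ i p, A i p = if p.1 = i then 1 else 0) (x : Fin k × Fin n → ℝ)
    (hbin : ∀ p, x p = 0 ∨ x p = 1) (hfeas : A *ᵥ x = fun _ => 1)
    (s : Fin k) (i j : Fin n) (hij : i ≠ j) : x (s, i) * x (s, j) = 0 := by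
  have hsum : ∑ l, x (s, l) = 1 := by
    have h := congrFun hfeas s
    simp only [mulVec, dotProduct, hA, Fintype.sum_prod_type] at h
    rw [Finset.sum_eq_single s (by intro b _ hb; simp [hb]) (by simp)] at h
    simpa using h
  have hnn : ∀ l, 0 ≤ x (s, l) := fun l => by
    rcases hbin (s, l) with h | h <;> rw [h] <;> norm_num
  have hle : x (s, i) + x (s, j) ≤ 1 := by
    rw [← hsum, ← Finset.sum_pair (f := fun l => x (s, l)) hij]
    exact Finset.sum_le_sum_of_subset_of_nonneg (Finset.subset_univ _) fun l _ _ => hnn l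
  rcases hbin (s, i) with h | h
  · simp [h]
  · rcases hbin (s, j) with h' | h'
    · simp [h']
    · rw [h, h'] at hle
      norm_num at hle

lemma trace_lift {k n : ℕ} (D : Matrix (Fin k × Fin n) (Fin k × Fin n) ℝ)
    (x : Fin k × Fin n → ℝ) :
    ((Matrix.fromBlocks 0 0 0 D : Matrix (Unit ⊕ Fin k × Fin n) (Unit ⊕ Fin k × Fin n) ℝ) *
      vecMulVec (Sum.elim (fun _ : Unit => (1 : ℝ)) x)
        (Sum.elim (fun _ : Unit => (1 : ℝ)) x)).trace = x ⬝ᵥ (D *ᵥ x) := by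
  rw [mul_vecMulVec, trace_vecMulVec, fromBlocks_mulVec]
  simp [dotProduct, Fintype.sum_sum_type, mul_comm]

lemma compress_vecMulVec {ι κ : Type*} [Fintype ι] [Fintype κ] [DecidableEq κ] (V : Matrix ι κ ℝ)
    (hV : Vᵀ * V = 1) (y : ι → ℝ) (hy : ∃ w, y = V *ᵥ w) :
    V * (Vᵀ * vecMulVec y y * V) * Vᵀ = vecMulVec y y := by
  obtain ⟨w, rfl⟩ := hy
  have h : Vᵀ *ᵥ (V *ᵥ w) = w := by rw [mulVec_mulVec, hV, one_mulVec]
  rw [mul_vecMulVec, h, vecMulVec_mul, ← mulVec_transpose, h, mul_vecMulVec, vecMulVec_mul,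
    vecMul_transpose]

/-- duality gap construction for the facially reduced DNN relaxation of
the BCQP `min xᵀDx, Ax = e, x ∈ {0,1}^N`: from `m = N+1−k` linearly independent lifted
optimal solutions one builds `Ŷ = VR̂Vᵀ` with `R̂ ≻ 0` and `⟨D̂,Ŷ⟩ = p*`; and from a
feasible non-optimal `x̄`, the perturbations `Z = Ŷ + ε(Ŷ − ȳȳᵀ)` are feasible for the
relaxation (with `R_Z = VᵀZV ≻ 0`, arrow and gangster constraints satisfied) and have
objective value below `p*`.  The index `0` is `Sum.inl ()`. -/
theorem dnn_relaxation_duality_gap_from_multiple_optima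
    (k n : ℕ) (hk : 0 < k) (hn : 0 < n)
    (A : Matrix (Fin k) (Fin k × Fin n) ℝ)
    (hA : ∀ i p, A i p = if p.1 = i then 1 else 0)
    (B : Matrix (Fin k) (Unit ⊕ Fin k × Fin n) ℝ)
    (hB : ∀ i, B i (Sum.inl ()) = -1 ∧ ∀ p, B i (Sum.inr p) = A i p)
    (V : Matrix (Unit ⊕ Fin k × Fin n) (Fin (k * n + 1 - k)) ℝ)
    (hVorth : Vᵀ * V = 1)
    (hVrange : ∀ u : Unit ⊕ Fin k × Fin n → ℝ,
      B *ᵥ u = 0 ↔ ∃ w : Fin (k * n + 1 - k) → ℝ, u = V *ᵥ w)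
    (D : Matrix (Fin k × Fin n) (Fin k × Fin n) ℝ) (hD : D.IsSymm)
    (Dhat : Matrix (Unit ⊕ Fin k × Fin n) (Unit ⊕ Fin k × Fin n) ℝ)
    (hDhat : Dhat = Matrix.fromBlocks 0 0 0 D)
    (pstar : ℝ)
    (hpstar : IsLeast {t : ℝ | ∃ x' : Fin k × Fin n → ℝ,
      (A *ᵥ x' = fun _ => 1) ∧ (∀ p, x' p = 0 ∨ x' p = 1) ∧
        t = x' ⬝ᵥ (D *ᵥ x')} pstar)
    (x : Fin (k * n + 1 - k) → (Fin k × Fin n → ℝ))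
    (hfeas : ∀ i, A *ᵥ x i = fun _ => 1)
    (hbin : ∀ i p, x i p = 0 ∨ x i p = 1)
    (hopt : ∀ i, x i ⬝ᵥ (D *ᵥ x i) = pstar)
    (hli : LinearIndependent ℝ fun i => Sum.elim (fun _ : Unit => (1 : ℝ)) (x i))
    (Yhat : Matrix (Unit ⊕ Fin k × Fin n) (Unit ⊕ Fin k × Fin n) ℝ)
    (hYhat : Yhat = (1 / ((k * n + 1 - k : ℕ) : ℝ)) •
      ∑ i, vecMulVec (Sum.elim (fun _ : Unit => (1 : ℝ)) (x i)) (Sum.elim (fun _ : Unit => (1 : ℝ)) (x i)))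
    (Rhat : Matrix (Fin (k * n + 1 - k)) (Fin (k * n + 1 - k)) ℝ)
    (hRhat : Rhat = Vᵀ * Yhat * V) :
    Yhat = V * Rhat * Vᵀ ∧ Rhat.PosDef ∧ (Dhat * Yhat).trace = pstar ∧
      ∀ xbar : Fin k × Fin n → ℝ, (∀ p, xbar p = 0 ∨ xbar p = 1) →
        (A *ᵥ xbar = fun _ => 1) → pstar < xbar ⬝ᵥ (D *ᵥ xbar) →
        ∃ ε₀ > (0 : ℝ), ∀ ε : ℝ, 0 < ε → ε < ε₀ →
          ∀ Z : Matrix (Unit ⊕ Fin k × Fin n) (Unit ⊕ Fin k × Fin n) ℝ,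
            Z = Yhat + ε • (Yhat -
              vecMulVec (Sum.elim (fun _ : Unit => (1 : ℝ)) xbar) (Sum.elim (fun _ : Unit => (1 : ℝ)) xbar)) →
            Z = V * (Vᵀ * Z * V) * Vᵀ ∧ (Vᵀ * Z * V).PosDef ∧
              Z (Sum.inl ()) (Sum.inl ()) = 1 ∧
              (∀ p : Fin k × Fin n, Z (Sum.inr p) (Sum.inr p) = Z (Sum.inl ()) (Sum.inr p)) ∧
              (∀ (s : Fin k) (i j : Fin n), i ≠ j → Z (Sum.inr (s, i)) (Sum.inr (s, j)) = 0) ∧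
              (Dhat * Z).trace < pstar := by
  have hmpos : 0 < k * n + 1 - k := by
    have : k * 1 ≤ k * n := Nat.mul_le_mul_left k hn
    omega
  -- Feasible lifts lie in the nullspace of `B`, that is, in the range of `V`.
  have hlift : ∀ x' : Fin k × Fin n → ℝ, (A *ᵥ x' = fun _ => 1) →
      ∃ w, Sum.elim (fun _ : Unit => (1 : ℝ)) x' = V *ᵥ w := by
    intro x' hx'
    rw [← hVrange]
    funext i
    have h := congrFun hx' i
    simp only [mulVec, dotProduct] at h
    simp [mulVec, dotProduct, Fintype.sum_sum_type, (hB i).1, (hB i).2, h]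
  generalize k * n + 1 - k = m at *
  have hm' : (m : ℝ) ≠ 0 := by exact_mod_cast hmpos.ne'
  set y : Fin m → (Unit ⊕ Fin k × Fin n → ℝ) :=
    fun i => Sum.elim (fun _ : Unit => (1 : ℝ)) (x i) with hydef
  have hy : ∀ i, ∃ w, y i = V *ᵥ w := fun i => hlift _ (hfeas i)
  have hYhat' : Yhat = (1 / (m : ℝ)) • ∑ i, vecMulVec (y i) (y i) := hYhat
  have hYV : V * (Vᵀ * Yhat * V) * Vᵀ = Yhat := by
    rw [hYhat']
    simp only [Matrix.mul_smul, Matrix.smul_mul, Matrix.mul_sum, Matrix.sum_mul]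
    simp_rw [compress_vecMulVec V hVorth _ (hy _)]
  have hYtr : (Dhat * Yhat).trace = pstar := by
    rw [hYhat, hDhat]
    simp only [Matrix.mul_smul, Matrix.mul_sum, trace_smul, trace_sum, trace_lift, hopt]
    simp [hm']
  have hent : ∀ p q, Yhat p q = (1 / (m : ℝ)) * ∑ i, y i p * y i q := by
    intro p q
    rw [hYhat']
    simp [Matrix.sum_apply, vecMulVec_apply]
  refine ⟨by rw [hRhat, hYV], ?_, hYtr, ?_⟩
  · have := posDef_perturb hmpos V hVorth y hli hy 0 0 le_rfl (by simp) Yhat hYhat'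
    rw [hRhat]
    simpa using this
  intro xbar hxb hxA hxD
  obtain ⟨w, hw⟩ := hlift xbar hxA
  obtain ⟨a, ha⟩ := exists_coeff_of_range V y hli hy w
  have hS : (0 : ℝ) ≤ m * ∑ i, a i ^ 2 := by positivity
  refine ⟨1 / (m * ∑ i, a i ^ 2 + 1), by positivity, ?_⟩
  intro ε hε hε0 Z hZ
  rw [lt_div_iff₀ (by positivity)] at hε0
  have hsq : ∀ t : ℝ, t = 0 ∨ t = 1 → t * t = t := by
    rintro t (rfl | rfl) <;> norm_num
  refine ⟨?_, ?_, ?_, ?_, ?_, ?_⟩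
  · rw [hZ]
    simp only [Matrix.mul_add, Matrix.add_mul, Matrix.mul_sub, Matrix.sub_mul, Matrix.mul_smul,
      Matrix.smul_mul]
    rw [hYV, compress_vecMulVec V hVorth _ (hlift xbar hxA)]
  · rw [hZ, hw, ha]
    exact posDef_perturb hmpos V hVorth y hli hy a ε hε.le (by nlinarith) Yhat hYhat'
  · rw [hZ]
    simp [hent, vecMulVec_apply, hydef, hm']
  · intro p
    rw [hZ]
    simp [hent, vecMulVec_apply, hydef, hsq _ (hxb p), hsq _ (hbin _ p)]
  · intro s i j hij
    rw [hZ]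
    simp [hent, vecMulVec_apply, hydef, gangster_vec A hA xbar hxb hxA s i j hij,
      gangster_vec A hA (x _) (hbin _) (hfeas _) s i j hij, -mul_eq_zero]
  · rw [hZ, Matrix.mul_add, Matrix.mul_smul, Matrix.mul_sub, trace_add, trace_smul, trace_sub,
      hYtr, hDhat, trace_lift, smul_eq_mul]
    nlinarith
end

section
/- Let V ∈ ℝ^{p×m} satisfy VᵀV = I_m, and let M ∈ S^p. Then for every R ∈ S^m, ‖M − V R Vᵀ‖_F² = ‖Vᵀ M V − R‖_F² + ‖M‖_F² − ‖Vᵀ M V‖_F². Consequently, for any subset S ⊆ S^m, a matrix R ∈ S minimizes ‖M − V R Vᵀ‖_F over S if and only if it minimizes ‖R − Vᵀ M V‖_F over S. -/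
/-!
With the trace inner product `⟨A, B⟩ = tr(AᵀB)`, the identity is two expansions of a squared
distance. The map `R ↦ V R Vᵀ` is an isometry because `VᵀV = 1`, and its adjoint is
`M ↦ Vᵀ M V`, so `‖M − V R Vᵀ‖²` and `‖VᵀMV − R‖²` have the same cross term and the same
quadratic term in `R`. They therefore differ by a quantity independent of `R`, which gives the
equivalence of the two minimization problems.
-/

open Matrix

/-- The Frobenius norm of a real matrix. -/
noncomputable def frobNorm {p m : ℕ} (A : Matrix (Fin p) (Fin m) ℝ) : ℝ :=
  Real.sqrt (∑ i, ∑ j, A i j ^ 2)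

lemma frobNorm_nonneg {p m : ℕ} (A : Matrix (Fin p) (Fin m) ℝ) : 0 ≤ frobNorm A :=
  Real.sqrt_nonneg _

lemma frobNorm_sq {p m : ℕ} (A : Matrix (Fin p) (Fin m) ℝ) :
    frobNorm A ^ 2 = (Aᵀ * A).trace := by
  unfold frobNorm
  rw [Real.sq_sqrt (by positivity), Finset.sum_comm]
  simp [Matrix.trace, Matrix.mul_apply, sq]

lemma frobNorm_sub_sq {p m : ℕ} (A B : Matrix (Fin p) (Fin m) ℝ) :
    frobNorm (A - B) ^ 2 = frobNorm A ^ 2 - 2 * (Aᵀ * B).trace + frobNorm B ^ 2 := by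
  have h : (Bᵀ * A).trace = (Aᵀ * B).trace := by
    rw [← Matrix.trace_transpose, Matrix.transpose_mul, Matrix.transpose_transpose]
  simp only [frobNorm_sq, Matrix.transpose_sub, Matrix.sub_mul, Matrix.mul_sub,
    Matrix.trace_sub, h]
  ring

lemma frobNorm_sub_comm {p m : ℕ} (A B : Matrix (Fin p) (Fin m) ℝ) :
    frobNorm (A - B) = frobNorm (B - A) := by
  simp only [frobNorm, Matrix.sub_apply, sub_sq_comm]

/-- `R ↦ V R Vᵀ` is a Frobenius isometry when `V` has orthonormal columns. -/
lemma frobNorm_conj_sq {p m : ℕ} (V : Matrix (Fin p) (Fin m) ℝ) (hV : Vᵀ * V = 1)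
    (R : Matrix (Fin m) (Fin m) ℝ) : frobNorm (V * R * Vᵀ) ^ 2 = frobNorm R ^ 2 := by
  have h : (V * R * Vᵀ)ᵀ * (V * R * Vᵀ) = V * (Rᵀ * R * Vᵀ) := by
    calc (V * R * Vᵀ)ᵀ * (V * R * Vᵀ) = V * (Rᵀ * ((Vᵀ * V) * (R * Vᵀ))) := by
          simp only [Matrix.transpose_mul, Matrix.transpose_transpose, Matrix.mul_assoc]
      _ = V * (Rᵀ * R * Vᵀ) := by rw [hV, Matrix.one_mul, Matrix.mul_assoc]
  rw [frobNorm_sq, frobNorm_sq, h, Matrix.trace_mul_comm, Matrix.mul_assoc, hV, Matrix.mul_one]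

/-- `M ↦ Vᵀ M V` is the adjoint of `R ↦ V R Vᵀ` for the trace inner product. -/
lemma trace_conj_adjoint {p m : ℕ} (V : Matrix (Fin p) (Fin m) ℝ)
    (M : Matrix (Fin p) (Fin p) ℝ) (R : Matrix (Fin m) (Fin m) ℝ) :
    (Mᵀ * (V * R * Vᵀ)).trace = ((Vᵀ * M * V)ᵀ * R).trace := by
  rw [← Matrix.mul_assoc, Matrix.trace_mul_comm]
  simp only [Matrix.transpose_mul, Matrix.transpose_transpose, Matrix.mul_assoc]

/-- for `V` with orthonormal columns and `M ∈ S^p`,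
`‖M − VRVᵀ‖_F² = ‖VᵀMV − R‖_F² + ‖M‖_F² − ‖VᵀMV‖_F²` for every `R ∈ S^m`; hence over
any subset `S ⊆ S^m`, `R` minimizes `‖M − VRVᵀ‖_F` iff it minimizes `‖R − VᵀMV‖_F`. -/
theorem frobenius_reduction_identity_and_minimizers
    (p m : ℕ) (V : Matrix (Fin p) (Fin m) ℝ) (hV : Vᵀ * V = 1)
    (M : Matrix (Fin p) (Fin p) ℝ) (hM : M.IsSymm) :
    (∀ R : Matrix (Fin m) (Fin m) ℝ, R.IsSymm →
      frobNorm (M - V * R * Vᵀ) ^ 2 =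
        frobNorm (Vᵀ * M * V - R) ^ 2 + frobNorm M ^ 2 - frobNorm (Vᵀ * M * V) ^ 2) ∧
    ∀ S : Set (Matrix (Fin m) (Fin m) ℝ), (∀ R ∈ S, R.IsSymm) →
      ∀ R ∈ S,
        ((∀ R' ∈ S, frobNorm (M - V * R * Vᵀ) ≤ frobNorm (M - V * R' * Vᵀ)) ↔
          (∀ R' ∈ S, frobNorm (R - Vᵀ * M * V) ≤ frobNorm (R' - Vᵀ * M * V))) := by
  have key : ∀ R : Matrix (Fin m) (Fin m) ℝ, frobNorm (M - V * R * Vᵀ) ^ 2 =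
      frobNorm (Vᵀ * M * V - R) ^ 2 + frobNorm M ^ 2 - frobNorm (Vᵀ * M * V) ^ 2 := by
    intro R
    rw [frobNorm_sub_sq, frobNorm_sub_sq, frobNorm_conj_sq V hV, trace_conj_adjoint]
    ring
  refine ⟨fun R _ => key R, fun S _ R _ => forall₂_congr fun R' _ => ?_⟩
  rw [← sq_le_sq₀ (frobNorm_nonneg _) (frobNorm_nonneg _), key R, key R',
    frobNorm_sub_comm R, frobNorm_sub_comm R',
    ← sq_le_sq₀ (frobNorm_nonneg (Vᵀ * M * V - R)) (frobNorm_nonneg (Vᵀ * M * V - R'))]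
  constructor <;> intro h <;> linarith
end

section
/- Let M ∈ S^m be symmetric with spectral decomposition M = U Diag(d) Uᵀ, where U is orthogonal and d ∈ ℝ^m is the vector of eigenvalues. Let c > 0, let Δ = { x ∈ ℝ^m : x ≥ 0, eᵀx = c } be the scaled simplex, and let d* be the Euclidean projection of d onto Δ. Then R* = U Diag(d*) Uᵀ is a minimizer of ‖R − M‖_F over the set R = { R ∈ S^m : R ⪰ 0, trace(R) = c }, i.e., R* is a projection of M onto R. -/
/-! The Frobenius norm is invariant under `A ↦ U A Uᵀ` for orthogonal `U`, and so are the trace and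
positive semidefiniteness. Writing a feasible `R` as `U S Uᵀ` with `S = Uᵀ R U`, the diagonal of `S`
lies in the scaled simplex, and discarding the off-diagonal entries of `S - Diag(d)` gives
`‖R - M‖² ≥ ∑ i, (d i - S i i)² ≥ ∑ i, (d i - d* i)² = ‖R* - M‖²`. -/

open Matrix

theorem sum_sq_eq_trace {m : ℕ} (A : Matrix (Fin m) (Fin m) ℝ) :
    ∑ i, ∑ j, A i j ^ 2 = (A * Aᵀ).trace := by
  simp [Matrix.trace, Matrix.mul_apply, sq]

theorem frobNorm_conj {m : ℕ} (U A : Matrix (Fin m) (Fin m) ℝ) (hU : Uᵀ * U = 1) :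
    frobNorm (U * A * Uᵀ) = frobNorm A := by
  unfold frobNorm
  rw [sum_sq_eq_trace, sum_sq_eq_trace]
  have h : U * A * Uᵀ * (U * A * Uᵀ)ᵀ = U * (A * Aᵀ * Uᵀ) := by
    calc U * A * Uᵀ * (U * A * Uᵀ)ᵀ = U * A * (Uᵀ * U) * (Aᵀ * Uᵀ) := by
          simp only [Matrix.transpose_mul, Matrix.transpose_transpose, Matrix.mul_assoc]
      _ = U * (A * Aᵀ * Uᵀ) := by
          rw [hU, Matrix.mul_one]
          simp only [Matrix.mul_assoc]
  rw [h, Matrix.trace_mul_comm, Matrix.mul_assoc, hU, Matrix.mul_one]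

theorem frobNorm_diagonal {m : ℕ} (v : Fin m → ℝ) :
    frobNorm (Matrix.diagonal v) = Real.sqrt (∑ i, v i ^ 2) := by
  simp [frobNorm, Matrix.diagonal_apply, ite_pow]

theorem sqrt_sum_diag_sq_le_frobNorm {m : ℕ} (A : Matrix (Fin m) (Fin m) ℝ) :
    Real.sqrt (∑ i, A i i ^ 2) ≤ frobNorm A := by
  refine Real.sqrt_le_sqrt (Finset.sum_le_sum fun i _ => ?_)
  exact Finset.single_le_sum (f := fun j => A i j ^ 2) (fun j _ => sq_nonneg _)
    (Finset.mem_univ i)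

/-- spectral formula for the projection onto the set
`{R ⪰ 0 : trace R = c}`: if `M = U Diag(d) Uᵀ` with `U` orthogonal and `d*` is the
Euclidean projection of `d` onto the scaled simplex `Δ = {x ≥ 0 : eᵀx = c}`, then
`R* = U Diag(d*) Uᵀ` minimizes `‖R − M‖_F` over that set. -/
theorem spectral_projection_onto_trace_constrained_psd
    (m : ℕ) (c : ℝ) (hc : 0 < c)
    (M U : Matrix (Fin m) (Fin m) ℝ) (d : Fin m → ℝ)
    (hU : Uᵀ * U = 1) (hUU : U * Uᵀ = 1)
    (hM : M = U * Matrix.diagonal d * Uᵀ)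
    (dstar : Fin m → ℝ)
    (hdstar_mem : (∀ i, 0 ≤ dstar i) ∧ ∑ i, dstar i = c)
    (hdstar_proj : ∀ z : Fin m → ℝ, (∀ i, 0 ≤ z i) → ∑ i, z i = c →
      ∑ i, (d i - dstar i) ^ 2 ≤ ∑ i, (d i - z i) ^ 2) :
    (U * Matrix.diagonal dstar * Uᵀ).PosSemidef ∧
      (U * Matrix.diagonal dstar * Uᵀ).trace = c ∧
      ∀ R : Matrix (Fin m) (Fin m) ℝ, R.PosSemidef → R.trace = c →
        frobNorm (U * Matrix.diagonal dstar * Uᵀ - M) ≤ frobNorm (R - M) := by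
  refine ⟨?_, ?_, fun R hR hRc => ?_⟩
  · have h := (Matrix.PosSemidef.diagonal hdstar_mem.1).mul_mul_conjTranspose_same U
    rwa [Matrix.conjTranspose_eq_transpose_of_trivial] at h
  · rw [Matrix.trace_mul_comm, ← Matrix.mul_assoc, hU, Matrix.one_mul, Matrix.trace_diagonal]
    exact hdstar_mem.2
  · obtain ⟨S, hS⟩ : ∃ S, S = Uᵀ * R * U := ⟨_, rfl⟩
    have hSpsd : S.PosSemidef := by
      have h := hR.conjTranspose_mul_mul_same U
      rwa [Matrix.conjTranspose_eq_transpose_of_trivial, ← hS] at h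
    have hStr : ∑ i, S i i = c := by
      have h : S.trace = c := by
        rw [hS, Matrix.trace_mul_comm, ← Matrix.mul_assoc, hUU, Matrix.one_mul, hRc]
      exact h
    have hRS : R = U * S * Uᵀ := by
      calc R = (U * Uᵀ) * R * (U * Uᵀ) := by rw [hUU, Matrix.one_mul, Matrix.mul_one]
        _ = U * S * Uᵀ := by rw [hS]; simp only [Matrix.mul_assoc]
    have hconj : ∀ A B : Matrix (Fin m) (Fin m) ℝ,
        frobNorm (U * A * Uᵀ - U * B * Uᵀ) = frobNorm (A - B) := fun A B => by
      rw [← Matrix.sub_mul, ← Matrix.mul_sub, frobNorm_conj U _ hU]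
    rw [hM, hRS, hconj, hconj, Matrix.diagonal_sub, frobNorm_diagonal]
    refine le_trans (Real.sqrt_le_sqrt ?_) (sqrt_sum_diag_sq_le_frobNorm _)
    have h := hdstar_proj (fun i => S i i) (fun i => hSpsd.diag_nonneg) hStr
    simpa [sub_sq_comm] using h
end
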